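/- Cut-off Caccioppoli estimate (penultimate estimate in the proof of Lemma 3.1, smooth interior form): let u be B-harmonic on D* and let η : ℝ^d → ℝ be continuously differentiable with support a compact subset of D*. Then ∫_{D*} A∇(ηu)·∇(ηu) dx ≤ (2 a_max + 1) ∫_{D*} u² |∇η|² dx + ( 2‖div b‖_∞ + ‖b‖_∞² (1 + a_min⁻¹) ) ∫_{D*} η² u² dx. -/

import Mathlib

open MeasureTheory

/-- Partial derivative in direction `i`. -/
noncomputable def pd (d : ℕ) (i : Fin d) (f : (Fin d → ℝ) → ℝ) (x : Fin d → ℝ) : ℝ :=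
  fderiv ℝ f x (Pi.single i 1)

/-- The integrand `A ∇f · ∇g` at a point. -/
noncomputable def aForm (d : ℕ) (A : (Fin d → ℝ) → Matrix (Fin d) (Fin d) ℝ)
    (f g : (Fin d → ℝ) → ℝ) (x : Fin d → ℝ) : ℝ :=
  ∑ i, ∑ j, A x i j * pd d j f x * pd d i g x

/-- Divergence of a vector field. -/
noncomputable def divg (d : ℕ) (b : (Fin d → ℝ) → Fin d → ℝ) (x : Fin d → ℝ) : ℝ :=
  ∑ i, fderiv ℝ (fun y => b y i) x (Pi.single i 1)

/-- `u` is B-harmonic on `Dstar`: it is `C¹` and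
`∫_{D*} (A ∇u)·∇v − u b·∇v dx = 0` for all `C¹` functions `v` with compact support in `Dstar`. -/
def BHarmonic (d : ℕ) (Dstar : Set (Fin d → ℝ))
    (A : (Fin d → ℝ) → Matrix (Fin d) (Fin d) ℝ)
    (b : (Fin d → ℝ) → Fin d → ℝ) (u : (Fin d → ℝ) → ℝ) : Prop :=
  ContDiff ℝ 1 u ∧
  ∀ v : (Fin d → ℝ) → ℝ, ContDiff ℝ 1 v → HasCompactSupport v → tsupport v ⊆ Dstar →
    ∫ x in Dstar, (aForm d A u v x - u x * ∑ i, b x i * pd d i v x) = 0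

/-! Testing B-harmonicity with `v = η² u`, symmetry of `A` gives, for `w = η u`, the identity
`∫ A∇w·∇w = ∫ u b·∇v + ∫ u² A∇η·∇η`. Since `∇v = η ∇w + η u ∇η`, Young's inequality splits the
doubled drift `2 u b·∇v` into `a_min |∇w|² ≤ A∇w·∇w`, which is absorbed on the left, a multiple of
`u² |∇η|²` and a multiple of `η² u²`. -/

section QuadraticForms

open scoped Matrix

variable {m n R : Type*} [Fintype m] [Fintype n]

theorem sum_sum_mul_mul_eq_dotProduct_mulVec [NonUnitalCommSemiring R] (M : Matrix m n R)
    (p : n → R) (q : m → R) : ∑ i, ∑ j, M i j * p j * q i = q ⬝ᵥ M *ᵥ p := by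
  simp only [dotProduct, Matrix.mulVec, ← Finset.sum_mul, mul_comm (q _)]

theorem sum_sq_eq_dotProduct_self [Semiring R] (p : n → R) : ∑ i, p i ^ 2 = p ⬝ᵥ p := by
  simp only [dotProduct, sq]

theorem dotProduct_mulVec_comm_of_isSymm [CommSemiring R] {M : Matrix n n R} (hM : M.IsSymm)
    (p q : n → R) : p ⬝ᵥ M *ᵥ q = q ⬝ᵥ M *ᵥ p := by
  rw [← Matrix.dotProduct_transpose_mulVec, hM.eq]

/-- With `p = ∇η`, `q = ∇u`, `w = ∇(ηu)`, the vector `η w + η u p` is `∇(η² u)`. -/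
theorem dotProduct_mulVec_self_eq_of_isSymm [CommSemiring R] {M : Matrix n n R} (hM : M.IsSymm)
    {p q w : n → R} {e u : R} (hw : w = e • q + u • p) :
    w ⬝ᵥ M *ᵥ w = (e • w + (e * u) • p) ⬝ᵥ M *ᵥ q + u ^ 2 * (p ⬝ᵥ M *ᵥ p) := by
  have hcomm := dotProduct_mulVec_comm_of_isSymm hM p q
  subst hw
  simp only [Matrix.mulVec_add, Matrix.mulVec_smul, add_dotProduct, smul_dotProduct,
    dotProduct_add, dotProduct_smul, smul_add, smul_eq_mul, hcomm]
  ring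

variable [Field R] [LinearOrder R] [IsStrictOrderedRing R]

theorem two_mul_dotProduct_le {a : R} (ha : 0 < a) (x y : n → R) :
    2 * (x ⬝ᵥ y) ≤ a * (x ⬝ᵥ x) + a⁻¹ * (y ⬝ᵥ y) := by
  simp only [dotProduct, Finset.mul_sum, ← Finset.sum_add_distrib, ← mul_assoc, ← sq]
  refine Finset.sum_le_sum fun i _ => ?_
  simpa only [mul_assoc, sq] using two_mul_le_add_mul_sq (a := x i) (b := y i) ha

theorem two_mul_dotProduct_drift_le {a B : R} (ha : 0 < a) {b : n → R} (hb : b ⬝ᵥ b ≤ B ^ 2)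
    (p w : n → R) (e u : R) :
    2 * ((e • w + (e * u) • p) ⬝ᵥ u • b)
      ≤ a * (w ⬝ᵥ w) + u ^ 2 * (p ⬝ᵥ p) + B ^ 2 * (1 + a⁻¹) * (e ^ 2 * u ^ 2) := by
  have hw := two_mul_dotProduct_le ha w ((e * u) • b)
  have hp := two_mul_dotProduct_le one_pos (u • p) ((e * u) • b)
  have hB : (1 + a⁻¹) * (e * u) ^ 2 * (b ⬝ᵥ b) ≤ (1 + a⁻¹) * (e * u) ^ 2 * B ^ 2 := by gcongr
  simp only [add_dotProduct, smul_dotProduct, dotProduct_smul, smul_eq_mul] at hw hp ⊢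
  linear_combination hw + hp + hB

theorem dotProduct_mulVec_self_le {M : Matrix n n R} (hM : M.IsSymm) {a a' B : R} (ha : 0 < a)
    {b p q w : n → R} {e u : R} (hb : b ⬝ᵥ b ≤ B ^ 2) (hw : w = e • q + u • p)
    (hlower : a * (w ⬝ᵥ w) ≤ w ⬝ᵥ M *ᵥ w) (hupper : p ⬝ᵥ M *ᵥ p ≤ a' * (p ⬝ᵥ p)) :
    w ⬝ᵥ M *ᵥ w ≤ 2 * ((e • w + (e * u) • p) ⬝ᵥ (M *ᵥ q - u • b))
      + (2 * a' + 1) * (u ^ 2 * (p ⬝ᵥ p)) + B ^ 2 * (1 + a⁻¹) * (e ^ 2 * u ^ 2) := by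
  have henergy := dotProduct_mulVec_self_eq_of_isSymm hM hw
  have hdrift := two_mul_dotProduct_drift_le ha hb p w e u
  have hcutoff := mul_le_mul_of_nonneg_left hupper (sq_nonneg u)
  rw [dotProduct_sub]
  linear_combination 2 * henergy + hdrift + 2 * hcutoff + hlower

end QuadraticForms

theorem integrable_pow_mul_pow {X : Type*} [TopologicalSpace X] [MeasurableSpace X]
    [OpensMeasurableSpace X] {μ : Measure X} [IsFiniteMeasureOnCompacts μ] {f g : X → ℝ}
    (hf : Continuous f) (hfc : HasCompactSupport f) (hg : Continuous g) {m : ℕ} (hm : m ≠ 0)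
    (n : ℕ) : Integrable (fun x => f x ^ m * g x ^ n) μ :=
  ((hf.pow m).mul (hg.pow n)).integrable_of_hasCompactSupport
    (hfc.comp_left (g := fun t : ℝ => t ^ m) (zero_pow hm)).mul_right

section Gradient

open scoped Matrix

variable {d : ℕ}

/-- The gradient `∇f`, as the vector of the partial derivatives `pd`. -/
noncomputable def grad (f : (Fin d → ℝ) → ℝ) (x : Fin d → ℝ) : Fin d → ℝ :=
  fun i => pd d i f x

/-- The flux `A∇u - u b`: `u` is B-harmonic when its flux is weakly divergence free. -/
noncomputable def flux (A : (Fin d → ℝ) → Matrix (Fin d) (Fin d) ℝ)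
    (b : (Fin d → ℝ) → Fin d → ℝ) (u : (Fin d → ℝ) → ℝ) (x : Fin d → ℝ) : Fin d → ℝ :=
  A x *ᵥ grad u x - u x • b x

variable {A : (Fin d → ℝ) → Matrix (Fin d) (Fin d) ℝ} {b : (Fin d → ℝ) → Fin d → ℝ}
  {f g u η : (Fin d → ℝ) → ℝ}

theorem grad_mul {x : Fin d → ℝ} (hf : DifferentiableAt ℝ f x) (hg : DifferentiableAt ℝ g x) :
    grad (fun y => f y * g y) x = f x • grad g x + g x • grad f x := by
  ext i
  simp [grad, pd, fderiv_fun_mul hf hg]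

theorem continuous_grad (hf : ContDiff ℝ 1 f) : Continuous (grad f) :=
  continuous_pi fun _ => (hf.continuous_fderiv one_ne_zero).clm_apply continuous_const

theorem hasCompactSupport_grad (hf : HasCompactSupport f) : HasCompactSupport (grad f) :=
  (hf.fderiv ℝ).comp_left (g := fun (L : (Fin d → ℝ) →L[ℝ] ℝ) i => L (Pi.single i 1)) rfl

theorem integrable_grad_dotProduct {μ : Measure (Fin d → ℝ)} [IsFiniteMeasureOnCompacts μ]
    (hf : ContDiff ℝ 1 f) (hfc : HasCompactSupport f) {F : (Fin d → ℝ) → Fin d → ℝ}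
    (hF : Continuous F) : Integrable (fun x => grad f x ⬝ᵥ F x) μ :=
  ((continuous_grad hf).dotProduct hF).integrable_of_hasCompactSupport <|
    (hasCompactSupport_grad hfc).mono fun x hx hgrad => hx (by simp [hgrad])

theorem aForm_eq_dotProduct_mulVec (x : Fin d → ℝ) :
    aForm d A f g x = grad g x ⬝ᵥ A x *ᵥ grad f x :=
  sum_sum_mul_mul_eq_dotProduct_mulVec (A x) (grad f x) (grad g x)

theorem sum_sq_pd_eq_dotProduct_self (x : Fin d → ℝ) :
    ∑ i, pd d i f x ^ 2 = grad f x ⬝ᵥ grad f x :=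
  sum_sq_eq_dotProduct_self (grad f x)

theorem aForm_sub_drift_eq_dotProduct_flux (x : Fin d → ℝ) :
    aForm d A u g x - u x * ∑ i, b x i * pd d i g x = grad g x ⬝ᵥ flux A b u x := by
  rw [aForm_eq_dotProduct_mulVec, flux, dotProduct_sub, dotProduct_smul, dotProduct_comm _ (b x)]
  rfl

theorem continuous_flux (hA : Continuous A) (hb : Continuous b) (hu : ContDiff ℝ 1 u) :
    Continuous (flux A b u) :=
  (hA.matrix_mulVec (continuous_grad hu)).sub (hu.continuous.smul hb)

theorem integrable_aForm {μ : Measure (Fin d → ℝ)} [IsFiniteMeasureOnCompacts μ]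
    (hA : Continuous A) (hf : ContDiff ℝ 1 f) (hg : ContDiff ℝ 1 g) (hgc : HasCompactSupport g) :
    Integrable (aForm d A f g) μ :=
  (integrable_grad_dotProduct hg hgc (hA.matrix_mulVec (continuous_grad hf))).congr <|
    .of_forall fun x => (aForm_eq_dotProduct_mulVec x).symm

theorem integrable_sq_mul_sum_sq_pd {μ : Measure (Fin d → ℝ)} [IsFiniteMeasureOnCompacts μ]
    (hu : Continuous u) (hη : ContDiff ℝ 1 η) (hηc : HasCompactSupport η) :
    Integrable (fun x => u x ^ 2 * ∑ i, pd d i η x ^ 2) μ := by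
  simpa only [sum_sq_pd_eq_dotProduct_self, dotProduct_smul, smul_eq_mul] using
    integrable_grad_dotProduct (μ := μ) (F := fun x => u x ^ 2 • grad η x) hη hηc
      ((hu.pow 2).smul (continuous_grad hη))

theorem BHarmonic.integral_grad_dotProduct_flux {D : Set (Fin d → ℝ)} (hu : BHarmonic d D A b u)
    (hg : ContDiff ℝ 1 g) (hgc : HasCompactSupport g) (hgs : tsupport g ⊆ D) :
    ∫ x in D, grad g x ⬝ᵥ flux A b u x = 0 := by
  simpa only [aForm_sub_drift_eq_dotProduct_flux] using hu.2 g hg hgc hgs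

theorem aForm_mul_self_le {x : Fin d → ℝ} {a a' B : ℝ} (hA : (A x).IsSymm) (ha : 0 < a)
    (hellip : ∀ ξ : Fin d → ℝ, a * ∑ i, ξ i ^ 2 ≤ (∑ i, ∑ j, A x i j * ξ j * ξ i) ∧
      (∑ i, ∑ j, A x i j * ξ j * ξ i) ≤ a' * ∑ i, ξ i ^ 2)
    (hb : Real.sqrt (∑ i, b x i ^ 2) ≤ B)
    (hu : DifferentiableAt ℝ u x) (hη : DifferentiableAt ℝ η x) :
    aForm d A (fun y => η y * u y) (fun y => η y * u y) x
      ≤ 2 * (grad (fun y => η y * (η y * u y)) x ⬝ᵥ flux A b u x)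
        + (2 * a' + 1) * (u x ^ 2 * ∑ i, pd d i η x ^ 2)
        + B ^ 2 * (1 + a⁻¹) * (η x ^ 2 * u x ^ 2) := by
  have hb' : b x ⬝ᵥ b x ≤ B ^ 2 := by
    simpa only [sum_sq_eq_dotProduct_self] using (Real.sqrt_le_iff.mp hb).2
  simp only [sum_sum_mul_mul_eq_dotProduct_mulVec, sum_sq_eq_dotProduct_self] at hellip
  have hgrad : grad (fun y => η y * (η y * u y)) x
      = η x • grad (fun y => η y * u y) x + (η x * u x) • grad η x :=
    grad_mul hη (hη.fun_mul hu)
  rw [aForm_eq_dotProduct_mulVec, sum_sq_pd_eq_dotProduct_self, hgrad]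
  exact dotProduct_mulVec_self_le hA ha hb' (grad_mul hη hu) (hellip _).1 (hellip _).2

end Gradient

theorem cutoff_caccioppoli_estimate_general
    {d : ℕ} {D : Set (Fin d → ℝ)} {A : (Fin d → ℝ) → Matrix (Fin d) (Fin d) ℝ}
    (hA : Continuous A) (hAsymm : ∀ x, (A x).IsSymm) {amin amax : ℝ} (hamin : 0 < amin)
    (hellip : ∀ (x ξ : Fin d → ℝ),
      amin * ∑ i, ξ i ^ 2 ≤ (∑ i, ∑ j, A x i j * ξ j * ξ i) ∧
      (∑ i, ∑ j, A x i j * ξ j * ξ i) ≤ amax * ∑ i, ξ i ^ 2)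
    {b : (Fin d → ℝ) → Fin d → ℝ} (hb : Continuous b) {B : ℝ}
    (hbB : ∀ x, Real.sqrt (∑ i, b x i ^ 2) ≤ B)
    {u : (Fin d → ℝ) → ℝ} (hu : BHarmonic d D A b u) {η : (Fin d → ℝ) → ℝ}
    (hη : ContDiff ℝ 1 η) (hηc : HasCompactSupport η) (hηs : tsupport η ⊆ D) :
    (∫ x in D, aForm d A (fun y => η y * u y) (fun y => η y * u y) x)
      ≤ (2 * amax + 1) * (∫ x in D, u x ^ 2 * ∑ i, pd d i η x ^ 2)
        + B ^ 2 * (1 + amin⁻¹) * ∫ x in D, η x ^ 2 * u x ^ 2 := by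
  have hw : ContDiff ℝ 1 fun y => η y * u y := hη.mul hu.1
  have hv : ContDiff ℝ 1 fun y => η y * (η y * u y) := hη.mul hw
  have hvc : HasCompactSupport fun y => η y * (η y * u y) := hηc.mul_right
  have hflux : ∫ x in D, grad (fun y => η y * (η y * u y)) x ⬝ᵥ flux A b u x = 0 :=
    hu.integral_grad_dotProduct_flux hv hvc (tsupport_mul_subset_left.trans hηs)
  have hint_energy := integrable_aForm (μ := volume.restrict D) hA hw hw hηc.mul_right
  have hint_flux := (integrable_grad_dotProduct (μ := volume.restrict D) hv hvc
    (continuous_flux hA hb hu.1)).const_mul 2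
  have hint_grad := (integrable_sq_mul_sum_sq_pd (μ := volume.restrict D) hu.1.continuous hη
    hηc).const_mul (2 * amax + 1)
  have hint_mass := (integrable_pow_mul_pow (μ := volume.restrict D) hη.continuous hηc
    hu.1.continuous two_ne_zero 2).const_mul (B ^ 2 * (1 + amin⁻¹))
  refine (integral_mono hint_energy ((hint_flux.add hint_grad).add hint_mass) fun x =>
    aForm_mul_self_le (hAsymm x) hamin (hellip x) (hbB x) (hu.1.differentiable one_ne_zero x)
      (hη.differentiable one_ne_zero x)).trans_eq ?_
  rw [integral_add' (hint_flux.add hint_grad) hint_mass, integral_add' hint_flux hint_grad]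
  simp only [integral_const_mul, hflux, mul_zero, zero_add]

theorem cutoff_caccioppoli_estimate
    (d : ℕ) (hd : 0 < d)
    (Dstar : Set (Fin d → ℝ)) (hopen : IsOpen Dstar) (hbdd : Bornology.IsBounded Dstar)
    (A : (Fin d → ℝ) → Matrix (Fin d) (Fin d) ℝ)
    (hAcont : Continuous A) (hAsymm : ∀ x, (A x).IsSymm)
    (amin amax : ℝ) (h0 : 0 < amin) (h1 : amin ≤ amax)
    (hellip : ∀ (x ξ : Fin d → ℝ),
      amin * ∑ i, ξ i ^ 2 ≤ (∑ i, ∑ j, A x i j * ξ j * ξ i) ∧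
      (∑ i, ∑ j, A x i j * ξ j * ξ i) ≤ amax * ∑ i, ξ i ^ 2)
    (b : (Fin d → ℝ) → Fin d → ℝ) (hb : ContDiff ℝ 1 b)
    (bBound divbBound : ℝ)
    (hbB : ∀ x, Real.sqrt (∑ i, b x i ^ 2) ≤ bBound)
    (hdivbB : ∀ x, |divg d b x| ≤ divbBound)
    (u : (Fin d → ℝ) → ℝ) (hu : BHarmonic d Dstar A b u)
    (η : (Fin d → ℝ) → ℝ) (hη : ContDiff ℝ 1 η)
    (hηc : HasCompactSupport η) (hηs : tsupport η ⊆ Dstar) :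
    (∫ x in Dstar, aForm d A (fun y => η y * u y) (fun y => η y * u y) x)
      ≤ (2 * amax + 1) * (∫ x in Dstar, u x ^ 2 * ∑ i, (pd d i η x) ^ 2)
        + (2 * divbBound + bBound ^ 2 * (1 + amin⁻¹)) *
            ∫ x in Dstar, η x ^ 2 * u x ^ 2 := by
  have hdiv : 0 ≤ divbBound := (abs_nonneg _).trans (hdivbB 0)
  refine (cutoff_caccioppoli_estimate_general hAcont hAsymm h0 hellip hb.continuous hbB hu hη hηc
    hηs).trans ?_
  gcongr
  linarith
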